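/- Let K be a trace class operator on a separable Hilbert space such that I + K is invertible, and let P be an orthogonal projection with Q = I − P. Then det(P(I + K)P) = det(I + K) · det(Q (I + K)^{−1} Q), where the determinants of P(I+K)P and Q(I+K)^{−1}Q are taken on the ranges of P and Q respectively. -/

import Mathlib

open MeasureTheory
open scoped InnerProductSpace Classical

variable {H : Type*} [NormedAddCommGroup H] [InnerProductSpace ℂ H] [CompleteSpace H]

/-- A nuclear decomposition of an operator `K` as `K g = ∑ₙ ⟪vₙ, g⟫ uₙ` with
`∑ₙ ‖uₙ‖‖vₙ‖ < ∞`. -/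
def TraceDecomp (K : H →L[ℂ] H) (u v : ℕ → H) : Prop :=
  (∀ g : H, HasSum (fun n => (⟪v n, g⟫_ℂ) • u n) (K g)) ∧
    Summable (fun n => ‖u n‖ * ‖v n‖)

/-- `K` is trace class. -/
def IsTraceClass (K : H →L[ℂ] H) : Prop := ∃ u v : ℕ → H, TraceDecomp K u v

/-- Trace norm: the infimum of `∑ₙ ‖uₙ‖‖vₙ‖` over nuclear decompositions. -/
noncomputable def traceNorm (K : H →L[ℂ] H) : ℝ :=
  sInf {M : ℝ | ∃ u v : ℕ → H, TraceDecomp K u v ∧ (∑' n, ‖u n‖ * ‖v n‖) = M}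

/-- The trace of a trace class operator (via a choice of nuclear decomposition;
for trace class operators the value does not depend on the decomposition). -/
noncomputable def opTrace (K : H →L[ℂ] H) : ℂ :=
  if h : IsTraceClass K then ∑' n, ⟪h.choose_spec.choose n, h.choose n⟫_ℂ else 0

/-- The `m`-th Plemelj–Smithies coefficient: determinant of the `m × m` matrix with
entries `σ_{i-j+1} = Tr(K^{i-j+1})` below and on the diagonal, `m-1-i` on the
superdiagonal, `0` above. -/
noncomputable def plemeljCoeff (K : H →L[ℂ] H) (m : ℕ) : ℂ :=
  Matrix.det (Matrix.of fun i j : Fin m =>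
    if (j : ℕ) = (i : ℕ) + 1 then ((m - 1 - (i : ℕ) : ℕ) : ℂ)
    else if (j : ℕ) ≤ (i : ℕ) then opTrace (K ^ ((i : ℕ) - (j : ℕ) + 1)) else 0)

/-- The Fredholm determinant `det(I + K)`, via the Plemelj–Smithies formula. -/
noncomputable def fredholmDet (K : H →L[ℂ] H) : ℂ :=
  ∑' m : ℕ, plemeljCoeff K m / (Nat.factorial m : ℂ)


noncomputable def newtonE (σ : ℕ → ℂ) : ℕ → ℂ
  | 0 => 1
  | n + 1 => (∑ i : Fin (n + 1), (-1) ^ (n - (i : ℕ)) * newtonE σ i * σ (n - i + 1)) / (n + 1 : ℂ)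

lemma newtonE_zero (σ : ℕ → ℂ) : newtonE σ 0 = 1 := by rw [newtonE]

lemma newtonE_succ (σ : ℕ → ℂ) (n : ℕ) : (n + 1 : ℂ) * newtonE σ (n + 1) =
    ∑ i ∈ Finset.range (n + 1), (-1) ^ (n - i) * newtonE σ i * σ (n - i + 1) := by
  rw [newtonE, mul_div_cancel₀ _ (by exact_mod_cast Nat.succ_ne_zero n), Finset.sum_range]

lemma newtonE_unique (σ e : ℕ → ℂ) (h0 : e 0 = 1) (h : ∀ n : ℕ, (n + 1 : ℂ) * e (n + 1) =
    ∑ i ∈ Finset.range (n + 1), (-1) ^ (n - i) * e i * σ (n - i + 1)) (m : ℕ) :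
    newtonE σ m = e m := by
  induction m using Nat.strong_induction_on with
  | _ m ih =>
    cases m with
    | zero => rw [newtonE_zero, h0]
    | succ n =>
      have hn : (n + 1 : ℂ) ≠ 0 := by exact_mod_cast Nat.succ_ne_zero n
      apply mul_left_cancel₀ hn
      rw [newtonE_succ, h]
      refine Finset.sum_congr rfl fun i hi => ?_
      rw [ih i (Finset.mem_range.1 hi)]

lemma newtonE_congr (σ τ : ℕ → ℂ) (h : ∀ k, σ (k + 1) = τ (k + 1)) (m : ℕ) :
    newtonE σ m = newtonE τ m := by
  refine newtonE_unique σ _ (newtonE_zero τ) (fun n => ?_) m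
  rw [newtonE_succ]
  simp [h]

lemma newtonE_tendsto (σ : ℕ → ℕ → ℂ) (τ : ℕ → ℂ)
    (h : ∀ k, Filter.Tendsto (fun N => σ N (k + 1)) Filter.atTop (nhds (τ (k + 1)))) (m : ℕ) :
    Filter.Tendsto (fun N => newtonE (σ N) m) Filter.atTop (nhds (newtonE τ m)) := by
  induction m using Nat.strong_induction_on with
  | _ m ih =>
    cases m with
    | zero => simp [newtonE_zero]
    | succ n =>
      simp only [newtonE]
      refine Filter.Tendsto.div_const (tendsto_finsetSum _ fun i _ => ?_) _
      exact (tendsto_const_nhds.mul (ih i i.2)).mul (h _)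

/-- Plemelj-Smithies determinants in terms of the Newton recursion. -/
lemma det_plemelj (σ : ℕ → ℂ) (m : ℕ) :
    Matrix.det (Matrix.of fun i j : Fin m =>
      if (j : ℕ) = (i : ℕ) + 1 then ((m - 1 - (i : ℕ) : ℕ) : ℂ)
      else if (j : ℕ) ≤ (i : ℕ) then σ ((i : ℕ) - (j : ℕ) + 1) else 0) =
      (m.factorial : ℂ) * newtonE σ m := by
  cases m with
  | zero => simp [newtonE_zero]
  | succ m =>
  set N : Matrix (Fin (m + 1)) (Fin (m + 1)) ℂ := Matrix.of fun i j =>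
      if (j : ℕ) = (i : ℕ) + 1 then (((i : ℕ) + 1 : ℕ) : ℂ)
      else if (j : ℕ) ≤ (i : ℕ) then σ ((i : ℕ) - (j : ℕ) + 1) else 0 with hN
  have h1 : (Matrix.of fun i j : Fin (m + 1) =>
      if (j : ℕ) = (i : ℕ) + 1 then ((m + 1 - 1 - (i : ℕ) : ℕ) : ℂ)
      else if (j : ℕ) ≤ (i : ℕ) then σ ((i : ℕ) - (j : ℕ) + 1) else 0) =
      (N.submatrix Fin.revPerm Fin.revPerm).transpose := by
    ext i j
    have hi := i.2
    have hj := j.2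
    simp only [hN, Matrix.of_apply, Matrix.transpose_apply, Matrix.submatrix_apply,
      Fin.revPerm_apply, Fin.val_rev]
    split_ifs <;> first | rfl | omega | (congr 1; omega)
  rw [h1, Matrix.det_transpose, Matrix.det_submatrix_equiv_self]
  set x : Fin (m + 1) → ℂ := fun j => (-1) ^ (j : ℕ) * newtonE σ j with hx
  have hNx : N.mulVec x = Pi.single (Fin.last m)
      ((-1) ^ m * ((m + 1 : ℂ) * newtonE σ (m + 1))) := by
    ext i
    have key : ∀ n : ℕ, ∑ j ∈ Finset.range (n + 1), σ (n - j + 1) * ((-1) ^ j * newtonE σ j) =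
        (-1) ^ n * ((n + 1 : ℂ) * newtonE σ (n + 1)) := by
      intro n
      rw [newtonE_succ, Finset.mul_sum]
      refine Finset.sum_congr rfl fun j hj => ?_
      have hj' : j ≤ n := by simpa [Nat.lt_succ_iff] using hj
      have : (-1 : ℂ) ^ n * (-1) ^ (n - j) = (-1) ^ j := by
        obtain ⟨d, rfl⟩ := Nat.exists_eq_add_of_le hj'
        rw [Nat.add_sub_cancel_left, pow_add, mul_assoc, ← mul_pow]; simp
      rw [← this]; ring
    have hsum : (N.mulVec x) i = ∑ j ∈ Finset.range (m + 1),
        (if j = (i : ℕ) + 1 then (((i : ℕ) + 1 : ℕ) : ℂ)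
        else if j ≤ (i : ℕ) then σ ((i : ℕ) - j + 1) else 0) * ((-1) ^ j * newtonE σ j) := by
      rw [Finset.sum_range]; rfl
    rw [hsum]
    have hsub : ∑ j ∈ Finset.range ((i : ℕ) + 1),
        (if j = (i : ℕ) + 1 then (((i : ℕ) + 1 : ℕ) : ℂ)
        else if j ≤ (i : ℕ) then σ ((i : ℕ) - j + 1) else 0) * ((-1) ^ j * newtonE σ j) =
        (-1) ^ (i : ℕ) * ((i + 1 : ℂ) * newtonE σ (i + 1)) := by
      rw [← key]
      refine Finset.sum_congr rfl fun j hj => ?_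
      have hj' := Finset.mem_range.1 hj
      rw [if_neg (by omega), if_pos (by omega)]
    by_cases him : i = Fin.last m
    · subst him
      simpa using hsub
    · have hlt : (i : ℕ) < m := by
        have := i.2
        have h2 : (i : ℕ) ≠ m := fun h => him (Fin.ext h)
        omega
      rw [Pi.single_eq_of_ne him]
      rw [← Finset.sum_subset (Finset.range_mono (show (i : ℕ) + 2 ≤ m + 1 by omega)),
        Finset.sum_range_succ, hsub, if_pos rfl]
      · push_cast; ring
      · intro j _ hj
        have : ¬ j < (i : ℕ) + 2 := by simpa using hj
        rw [if_neg (by omega), if_neg (by omega), zero_mul]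
  have hadj : N.adjugate.mulVec (N.mulVec x) = N.det • x := by
    rw [Matrix.mulVec_mulVec, Matrix.adjugate_mul, Matrix.smul_mulVec, Matrix.one_mulVec]
  have h0 := congrFun hadj 0
  rw [hNx] at h0
  have hx0 : x 0 = 1 := by simp [hx, newtonE_zero]
  have hcof : N.adjugate 0 (Fin.last m) = (-1) ^ m * (m.factorial : ℂ) := by
    rw [Matrix.adjugate_fin_succ_eq_det_submatrix, Matrix.det_of_isLowerTriangular]
    · simp [hN, Fin.succAbove_last]
      rw [Fin.prod_univ_eq_prod_range (fun i => (i : ℂ) + 1), ← Finset.prod_range_add_one_eq_factorial]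
      push_cast
      rfl
    · intro i j hij
      have : (i : ℕ) < j := by simpa using hij
      simp only [hN, Matrix.submatrix_apply, Matrix.of_apply, Fin.succAbove_last, Fin.zero_succAbove]
      rw [if_neg (by simp; omega), if_neg (by simp; omega)]
  simp only [Matrix.mulVec_single, Pi.smul_apply, hx0] at h0
  simp only [Matrix.col_apply, hcof] at h0
  have h4 : N.det = (-1) ^ m * (m.factorial : ℂ) * ((-1) ^ m * ((m + 1 : ℂ) * newtonE σ (m + 1))) := by
    simpa [mul_comm] using h0.symm
  rw [h4, Nat.factorial_succ]
  have : (-1 : ℂ) ^ m * (-1) ^ m = 1 := by rw [← mul_pow]; simp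
  push_cast
  linear_combination ((m.factorial : ℂ) * (m + 1) * newtonE σ (m + 1)) * this

open Polynomial in
lemma derivative_det {κ : Type*} [Fintype κ] [DecidableEq κ] (M : Matrix κ κ ℂ[X]) :
    derivative M.det = (M.adjugate * M.map derivative).trace := by
  have h1 : (M.adjugate * M.map derivative).trace =
      ∑ i, (M.updateCol i (fun j => derivative (M j i))).det := by
    simp only [Matrix.trace, Matrix.diag]
    refine Finset.sum_congr rfl fun i _ => ?_
    rw [← Matrix.cramer_apply, Matrix.cramer_eq_adjugate_mulVec]
    rfl
  rw [h1]
  simp only [Matrix.det_apply', derivative_sum]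
  rw [Finset.sum_comm]
  refine Finset.sum_congr rfl fun s _ => ?_
  rw [derivative_mul, derivative_intCast, zero_mul, zero_add, derivative_prod_finset, Finset.mul_sum]
  refine Finset.sum_congr rfl fun i _ => ?_
  congr 1
  rw [← Finset.mul_prod_erase Finset.univ _ (Finset.mem_univ i), mul_comm]
  congr 1
  · simp
  · refine Finset.prod_congr rfl fun j hj => ?_
    rw [Matrix.updateCol_ne (Finset.ne_of_mem_erase hj)]

open Polynomial in
lemma newtonE_matrix {κ : Type*} [Fintype κ] [DecidableEq κ] (G : Matrix κ κ ℂ) (m : ℕ) :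
    newtonE (fun k => (G ^ k).trace) m =
      (Matrix.det (1 + (X : ℂ[X]) • G.map C)).coeff m := by
  set M : Matrix κ κ ℂ[X] := 1 + (X : ℂ[X]) • G.map C with hM
  set p := M.det with hp
  let B : ℕ → Matrix κ κ ℂ := fun j => M.adjugate.map (fun q => q.coeff j)
  have hMB : M * M.adjugate = p • 1 := Matrix.mul_adjugate M
  have hMB' : M.adjugate + (X : ℂ[X]) • (G.map C * M.adjugate) = p • 1 := by
    rw [← hMB]
    conv_rhs => rw [hM, add_mul, one_mul, Matrix.smul_mul]
  have hent : ∀ n a b, (M.adjugate a b).coeff n +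
      ((X : ℂ[X]) * (∑ c, C (G a c) * M.adjugate c b)).coeff n = (p * (1 : Matrix κ κ ℂ[X]) a b).coeff n := by
    intro n a b
    have := congrFun (congrFun hMB' a) b
    simp only [Matrix.add_apply, Matrix.smul_apply, Matrix.mul_apply, Matrix.map_apply,
      smul_eq_mul] at this
    rw [← coeff_add, this]
  have hone : ∀ n a b, (p * (1 : Matrix κ κ ℂ[X]) a b).coeff n =
      (p.coeff n) * (1 : Matrix κ κ ℂ) a b := by
    intro n a b
    by_cases h : a = b <;> simp [Matrix.one_apply, h]
  have hB0 : B 0 = p.coeff 0 • 1 := by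
    ext a b
    have := hent 0 a b
    rw [hone] at this
    simpa [B] using this
  have hBs : ∀ n, B (n + 1) = p.coeff (n + 1) • 1 - G * B n := by
    intro n
    ext a b
    have := hent (n + 1) a b
    rw [hone, coeff_X_mul, finsetSum_coeff] at this
    simp only [coeff_C_mul] at this
    simp only [B, Matrix.sub_apply, Matrix.smul_apply, Matrix.mul_apply, Matrix.map_apply, smul_eq_mul]
    rw [← this]; ring
  have hB : ∀ n, B n = ∑ i ∈ Finset.range (n + 1), ((-1) ^ (n - i) * p.coeff i) • G ^ (n - i) := by
    intro n
    induction n with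
    | zero => simp [hB0]
    | succ n ih =>
      rw [hBs, ih, Finset.sum_range_succ _ (n + 1), Finset.mul_sum, sub_eq_add_neg, add_comm,
        ← Finset.sum_neg_distrib]
      congr 1
      · refine Finset.sum_congr rfl fun i hi => ?_
        have : n + 1 - i = (n - i) + 1 := by have := Finset.mem_range.1 hi; omega
        rw [this, Matrix.mul_smul, ← pow_succ', ← neg_smul]
        congr 1; ring
      · simp
  refine newtonE_unique _ _ ?_ ?_ m
  · have : p.coeff 0 = 1 := by
      rw [hp, hM, Matrix.coeff_det_one_add_X_smul_eq_sum_minors]; simp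
    exact this
  · intro n
    have hd := congrArg (fun q => q.coeff n) (derivative_det M)
    simp only [coeff_derivative] at hd
    have hMd : M.map derivative = G.map C := by
      ext1 a b
      simp [hM, Matrix.one_apply]
      split_ifs <;> simp
    rw [hMd] at hd
    have : ((M.adjugate * G.map C).trace).coeff n = (B n * G).trace := by
      simp [Matrix.trace, Matrix.mul_apply, B]
    rw [this, hB, Finset.sum_mul, Matrix.trace_sum] at hd
    rw [mul_comm, hd]
    refine Finset.sum_congr rfl fun i _ => ?_
    rw [Matrix.smul_mul, Matrix.trace_smul, pow_succ, smul_eq_mul]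

/-- Hadamard's inequality. -/
lemma hadamard_fin {m : ℕ} (A : Matrix (Fin m) (Fin m) ℂ) :
    ‖A.det‖ ≤ ∏ j, ‖(WithLp.toLp 2 (fun i => A i j) : EuclideanSpace ℂ (Fin m))‖ := by
  set f : Fin m → EuclideanSpace ℂ (Fin m) := fun j => WithLp.toLp 2 (fun i => A i j) with hf
  have hcard : Module.finrank ℂ (EuclideanSpace ℂ (Fin m)) = Fintype.card (Fin m) := by simp
  set g := InnerProductSpace.gramSchmidtOrthonormalBasis hcard f with hg
  set e := EuclideanSpace.basisFun (Fin m) ℂ with he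
  have h1 : A = e.toBasis.toMatrix f := by
    ext i j
    simp [Module.Basis.toMatrix_apply, he, hf]
  have h2 : e.toBasis.toMatrix f = e.toBasis.toMatrix g.toBasis * g.toBasis.toMatrix f := by
    rw [Module.Basis.toMatrix_mul_toMatrix]
  have h3 : ‖(e.toBasis.toMatrix g.toBasis).det‖ = 1 := by
    have := e.det_to_matrix_orthonormalBasis g
    simpa [Module.Basis.det_apply] using this
  have h4 : (g.toBasis.toMatrix f).det = ∏ i, ⟪g i, f i⟫_ℂ := by
    have := InnerProductSpace.gramSchmidtOrthonormalBasis_det hcard f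
    rwa [Module.Basis.det_apply] at this
  have h5 : A.det = _ := congrArg Matrix.det (h1.trans h2)
  rw [h5, Matrix.det_mul, norm_mul, h3, one_mul, h4, norm_prod]
  refine Finset.prod_le_prod (fun _ _ => norm_nonneg _) fun i _ => ?_
  refine (norm_inner_le_norm _ _).trans ?_
  rw [g.orthonormal.1 i, one_mul]

lemma det_bound {κ : Type*} [Fintype κ] [DecidableEq κ] (A : Matrix κ κ ℂ) (a : κ → ℝ)
    (ha : ∀ j, 0 ≤ a j) (h : ∀ i j, ‖A i j‖ ≤ a j) :
    ‖A.det‖ ≤ ∏ j, (Real.sqrt (Fintype.card κ) * a j) := by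
  let φ := (Fintype.equivFin κ).symm
  rw [← Matrix.det_submatrix_equiv_self φ A, ← φ.prod_comp]
  refine (hadamard_fin _).trans (Finset.prod_le_prod (fun _ _ => norm_nonneg _) fun j _ => ?_)
  rw [EuclideanSpace.norm_eq]
  refine Real.sqrt_le_iff.2 ⟨mul_nonneg (Real.sqrt_nonneg _) (ha _), ?_⟩
  rw [mul_pow, Real.sq_sqrt (Nat.cast_nonneg _)]
  calc _ ≤ ∑ i : Fin (Fintype.card κ), (a (φ j)) ^ 2 := by
        refine Finset.sum_le_sum fun i _ => ?_
        exact pow_le_pow_left₀ (norm_nonneg _) (h _ _) 2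
    _ = _ := by simp

noncomputable def detBd (S : ℝ) (m : ℕ) : ℝ := (Real.sqrt m * (m : ℝ)⁻¹ * Real.exp S) ^ m

lemma summable_detBd (S : ℝ) : Summable (detBd S) := by
  have h : Filter.Tendsto (fun m : ℕ => Real.sqrt m * (m : ℝ)⁻¹ * Real.exp S) Filter.atTop (nhds 0) := by
    have h1 : Filter.Tendsto (fun m : ℕ => (Real.sqrt m)⁻¹) Filter.atTop (nhds 0) :=
      tendsto_inv_atTop_zero.comp (Real.tendsto_sqrt_atTop.comp tendsto_natCast_atTop_atTop)
    have h2 := h1.mul_const (Real.exp S)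
    rw [zero_mul] at h2
    refine h2.congr fun m => ?_
    congr 1
    rcases Nat.eq_zero_or_pos m with rfl | hm
    · simp
    · have : (0 : ℝ) < m := by exact_mod_cast hm
      have h3 : Real.sqrt m ≠ 0 := (Real.sqrt_pos.2 this).ne'
      have h4 := Real.mul_self_sqrt this.le
      field_simp
      nlinarith
  refine Summable.of_norm_bounded_eventually_nat (g := fun m => (1 / 2 : ℝ) ^ m)
    (summable_geometric_of_lt_one (by norm_num) (by norm_num)) ?_
  filter_upwards [h.eventually (gt_mem_nhds (show (0 : ℝ) < 1 / 2 by norm_num))] with m hm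
  have h0 : 0 ≤ Real.sqrt m * (m : ℝ)⁻¹ * Real.exp S := by positivity
  rw [detBd, norm_pow, Real.norm_of_nonneg h0]
  exact pow_le_pow_left₀ h0 hm.le m

open Polynomial in
lemma coeff_bound {κ : Type*} [Fintype κ] [DecidableEq κ] (G : Matrix κ κ ℂ) (a : κ → ℝ)
    (ha : ∀ j, 0 ≤ a j) (h : ∀ i j, ‖G i j‖ ≤ a j) (S : ℝ) (hS : ∑ j, a j ≤ S) (m : ℕ) :
    ‖(Matrix.det (1 + (X : ℂ[X]) • G.map C)).coeff m‖ ≤ detBd S m := by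
  rw [Matrix.coeff_det_one_add_X_smul_eq_sum_minors]
  rcases Nat.eq_zero_or_pos m with rfl | hm
  · simp [detBd]
  have hm' : (0 : ℝ) < m := by exact_mod_cast hm
  have h1 : ∀ s ∈ (Finset.univ : Finset κ).powersetCard m,
      ‖(G.submatrix (Subtype.val : s → κ) (Subtype.val : s → κ)).det‖ ≤
        (Real.sqrt m * (m : ℝ)⁻¹) ^ m * ∏ j ∈ s, (m * a j) := by
    intro s hs
    have hc : s.card = m := (Finset.mem_powersetCard.1 hs).2
    refine (det_bound _ (fun j : s => a j) (fun j => ha _) (fun i j => h _ _)).trans ?_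
    rw [Fintype.card_coe, hc, Finset.prod_coe_sort s (fun j => Real.sqrt m * a j)]
    simp only [Finset.prod_mul_distrib, Finset.prod_const, hc]
    rw [mul_pow, inv_pow]
    apply le_of_eq
    field_simp
  have h2 : ∑ s ∈ (Finset.univ : Finset κ).powersetCard m, ∏ j ∈ s, ((m : ℝ) * a j) ≤
      Real.exp S ^ m := by
    calc _ ≤ ∑ s ∈ (Finset.univ : Finset κ).powerset, ∏ j ∈ s, ((m : ℝ) * a j) := by
          refine Finset.sum_le_sum_of_subset_of_nonneg (fun s _ => by simp) fun s _ _ => ?_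
          exact Finset.prod_nonneg fun j _ => mul_nonneg hm'.le (ha j)
      _ = ∏ j, (1 + m * a j) := by rw [Finset.prod_one_add]
      _ ≤ ∏ j, Real.exp (m * a j) := by
          refine Finset.prod_le_prod (fun j _ => ?_) fun j _ => ?_
          · have := mul_nonneg hm'.le (ha j); linarith
          · rw [add_comm]; exact Real.add_one_le_exp _
      _ = Real.exp (m * ∑ j, a j) := by rw [← Real.exp_sum, Finset.mul_sum]
      _ ≤ Real.exp (m * S) := by gcongr
      _ = _ := by rw [Real.exp_nat_mul]
  refine (norm_sum_le _ _).trans ((Finset.sum_le_sum h1).trans ?_)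
  rw [← Finset.mul_sum, detBd, mul_pow _ (Real.exp S)]
  gcongr

open Polynomial in
lemma hasSum_coeff {κ : Type*} [Fintype κ] [DecidableEq κ] (G : Matrix κ κ ℂ) :
    ∑' m, (Matrix.det (1 + (X : ℂ[X]) • G.map C)).coeff m = (1 + G).det := by
  have h1 : (1 + G).det = (Matrix.det (1 + (X : ℂ[X]) • G.map C)).eval 1 := by
    rw [← coe_evalRingHom, RingHom.map_det]
    congr 1
    ext i j
    simp [Matrix.one_apply]
    split_ifs <;> simp
  rw [h1, eval_eq_sum_range,
    tsum_eq_sum (s := Finset.range ((Matrix.det (1 + (X : ℂ[X]) • G.map C)).natDegree + 1))]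
  · simp
  · intro b hb
    apply coeff_eq_zero_of_natDegree_lt
    simpa using hb

/-- The finite determinants of approximating matrices. -/
lemma block_det {κ : Type*} [Fintype κ] [DecidableEq κ] (A B C D : Matrix κ κ ℂ) :
    (1 + Matrix.fromBlocks A (B + A * B) C (D + C * B)).det = (1 + A).det * (1 + D).det := by
  have : (1 + Matrix.fromBlocks A (B + A * B) C (D + C * B)) =
      Matrix.fromBlocks (1 + A) 0 C (1 + D) * Matrix.fromBlocks 1 B 0 1 := by
    rw [← Matrix.fromBlocks_one, Matrix.fromBlocks_add, Matrix.fromBlocks_multiply]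
    congr 1 <;> simp [add_mul]
    abel
  rw [this, Matrix.det_mul, Matrix.det_fromBlocks_zero₁₂, Matrix.det_fromBlocks_zero₂₁]
  simp

open Filter Topology InnerProductSpace

lemma TraceDecomp.hasSum_basis {K : H →L[ℂ] H} {u v : ℕ → H} (h : TraceDecomp K u v)
    {ι : Type*} (b : HilbertBasis ι ℂ H) :
    HasSum (fun i => ⟪b i, K (b i)⟫_ℂ) (∑' n, ⟪v n, u n⟫_ℂ) := by
  let F : ℕ × ι → ℂ := fun p => ⟪v p.1, b p.2⟫_ℂ * ⟪b p.2, u p.1⟫_ℂ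
  have hfin : ∀ n (s : Finset ι), ∑ i ∈ s, ‖F (n, i)‖ ≤ ‖u n‖ * ‖v n‖ := by
    intro n s
    simp only [F, norm_mul]
    refine (Real.sum_mul_le_sqrt_mul_sqrt s _ _).trans ?_
    rw [mul_comm]
    gcongr
    · exact Real.sqrt_le_iff.2 ⟨norm_nonneg _, b.orthonormal.sum_inner_products_le (u n)⟩
    · refine Real.sqrt_le_iff.2 ⟨norm_nonneg _, ?_⟩
      simp only [norm_inner_symm (v n)]
      exact b.orthonormal.sum_inner_products_le (v n)
  have hsum : Summable F := by
    refine Summable.of_norm ?_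
    rw [summable_prod_of_nonneg (fun _ => norm_nonneg _)]
    refine ⟨fun n => summable_of_sum_le (fun _ => norm_nonneg _) (hfin n), ?_⟩
    refine Summable.of_nonneg_of_le (fun n => tsum_nonneg fun _ => norm_nonneg _) (fun n => ?_) h.2
    exact tsum_le_of_sum_le' (by positivity) (hfin n)
  have h1 : HasSum (fun n => ⟪v n, u n⟫_ℂ) (∑' p, F p) :=
    hsum.hasSum.prod_fiberwise fun n => b.hasSum_inner_mul_inner (v n) (u n)
  rw [h1.tsum_eq]
  have h2 : HasSum (F ∘ Prod.swap) (∑' p, F p) :=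
    (Equiv.prodComm ι ℕ).hasSum_iff.2 hsum.hasSum
  refine h2.prod_fiberwise fun i => ?_
  have h3 := (h.1 (b i)).mapL (innerSL ℂ (b i))
  simpa [F, inner_smul_right, Function.comp_def] using h3

lemma IsTraceClass.hasSum_basis {K : H →L[ℂ] H} (h : IsTraceClass K)
    {ι : Type*} (b : HilbertBasis ι ℂ H) :
    HasSum (fun i => ⟪b i, K (b i)⟫_ℂ) (opTrace K) := by
  rw [opTrace, dif_pos h]
  exact TraceDecomp.hasSum_basis h.choose_spec.choose_spec b

lemma TraceDecomp.opTrace_eq {K : H →L[ℂ] H} {u v : ℕ → H} (h : TraceDecomp K u v) :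
    opTrace K = ∑' n, ⟪v n, u n⟫_ℂ := by
  obtain ⟨w, b, -⟩ := exists_hilbertBasis ℂ H
  exact (IsTraceClass.hasSum_basis ⟨u, v, h⟩ b).unique (h.hasSum_basis b)

lemma IsTraceClass.add {X Y : H →L[ℂ] H} (hX : IsTraceClass X) (hY : IsTraceClass Y) :
    IsTraceClass (X + Y) := by
  obtain ⟨u, v, h⟩ := hX
  obtain ⟨u', v', h'⟩ := hY
  obtain ⟨e⟩ : Nonempty (ℕ ≃ ℕ ⊕ ℕ) := ⟨Equiv.natSumNatEquivNat.symm⟩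
  refine ⟨Sum.elim u u' ∘ e, Sum.elim v v' ∘ e, fun g => ?_, ?_⟩
  · have h1 : HasSum (fun s => (⟪Sum.elim v v' s, g⟫_ℂ) • Sum.elim u u' s) (X g + Y g) :=
      HasSum.sum (h.1 g) (h'.1 g)
    exact e.hasSum_iff.2 h1
  · have h1 : Summable (fun s => ‖Sum.elim u u' s‖ * ‖Sum.elim v v' s‖) :=
      Summable.sum _ h.2 h'.2
    exact e.summable_iff.2 h1

lemma opTrace_add {X Y : H →L[ℂ] H} (hX : IsTraceClass X) (hY : IsTraceClass Y) :
    opTrace (X + Y) = opTrace X + opTrace Y := by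
  obtain ⟨w, b, -⟩ := exists_hilbertBasis ℂ H
  refine ((hX.add hY).hasSum_basis b).unique ?_
  simpa [inner_add_right] using (hX.hasSum_basis b).add (hY.hasSum_basis b)

lemma TraceDecomp.mul_left {K : H →L[ℂ] H} {u v : ℕ → H} (h : TraceDecomp K u v)
    (X : H →L[ℂ] H) : TraceDecomp (X * K) (fun n => X (u n)) v := by
  refine ⟨fun g => ?_, ?_⟩
  · simpa using (h.1 g).mapL X
  · refine Summable.of_nonneg_of_le (fun n => by positivity) (fun n => ?_) (h.2.mul_left ‖X‖)
    rw [← mul_assoc]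
    gcongr
    exact X.le_opNorm _

lemma TraceDecomp.mul_right {K : H →L[ℂ] H} {u v : ℕ → H} (h : TraceDecomp K u v)
    (X : H →L[ℂ] H) :
    TraceDecomp (K * X) u (fun n => (ContinuousLinearMap.adjoint X) (v n)) := by
  refine ⟨fun g => ?_, ?_⟩
  · simpa [ContinuousLinearMap.adjoint_inner_left] using h.1 (X g)
  · refine Summable.of_nonneg_of_le (fun n => by positivity) (fun n => ?_) (h.2.mul_left ‖X‖)
    have h1 := (ContinuousLinearMap.adjoint X).le_opNorm (v n)
    rw [LinearIsometryEquiv.norm_map] at h1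
    calc _ ≤ ‖u n‖ * (‖X‖ * ‖v n‖) := by gcongr
      _ = _ := by ring

lemma IsTraceClass.mul_left {K : H →L[ℂ] H} (h : IsTraceClass K) (X : H →L[ℂ] H) :
    IsTraceClass (X * K) := by
  obtain ⟨u, v, h⟩ := h
  exact ⟨_, _, h.mul_left X⟩

lemma IsTraceClass.mul_right {K : H →L[ℂ] H} (h : IsTraceClass K) (X : H →L[ℂ] H) :
    IsTraceClass (K * X) := by
  obtain ⟨u, v, h⟩ := h
  exact ⟨_, _, h.mul_right X⟩

lemma opTrace_mul_comm {K : H →L[ℂ] H} (h : IsTraceClass K) (X : H →L[ℂ] H) :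
    opTrace (X * K) = opTrace (K * X) := by
  obtain ⟨u, v, h⟩ := h
  rw [(h.mul_left X).opTrace_eq, (h.mul_right X).opTrace_eq]
  simp [ContinuousLinearMap.adjoint_inner_left]

/-- Normalised nuclear decompositions. -/
lemma IsTraceClass.normalized {K : H →L[ℂ] H} (h : IsTraceClass K) :
    ∃ u v : ℕ → H, TraceDecomp K u v ∧ (∀ n, ‖v n‖ ≤ 1) ∧ Summable (fun n => ‖u n‖) := by
  obtain ⟨u, v, h⟩ := h
  have hn : ∀ n, ‖((‖v n‖⁻¹ : ℝ) : ℂ) • v n‖ ≤ 1 := by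
    intro n
    rw [norm_smul, Complex.norm_real, norm_inv, norm_norm]
    exact inv_mul_le_one
  have hs : Summable (fun n => ‖((‖v n‖ : ℝ) : ℂ) • u n‖) := by
    refine h.2.congr fun n => ?_
    rw [norm_smul, Complex.norm_real, norm_norm, mul_comm]
  refine ⟨fun n => ((‖v n‖ : ℝ) : ℂ) • u n, fun n => ((‖v n‖⁻¹ : ℝ) : ℂ) • v n, ⟨fun g => ?_, ?_⟩,
    hn, hs⟩
  · convert! h.1 g using 2 with n
    rw [inner_smul_left, smul_smul, Complex.conj_ofReal]
    by_cases hv : v n = 0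
    · simp [hv]
    · have : ((‖v n‖ : ℝ) : ℂ) ≠ 0 := by simpa using hv
      congr 1
      push_cast
      field_simp
  · refine Summable.of_nonneg_of_le (fun n => by positivity) (fun n => ?_) hs
    exact mul_le_of_le_one_right (norm_nonneg _) (hn n)

lemma fredholmDet_eq (K : H →L[ℂ] H) :
    fredholmDet K = ∑' m, newtonE (fun k => opTrace (K ^ k)) m := by
  rw [fredholmDet]
  refine tsum_congr fun m => ?_
  rw [plemeljCoeff, det_plemelj (fun k => opTrace (K ^ k)),
    mul_div_cancel_left₀ _ (by exact_mod_cast Nat.factorial_ne_zero m)]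

lemma fredholmDet_limit (K : H →L[ℂ] H) (κ : ℕ → Type) [∀ N, Fintype (κ N)]
    [∀ N, DecidableEq (κ N)] (G : ∀ N, Matrix (κ N) (κ N) ℂ) (a : ∀ N, κ N → ℝ)
    (ha : ∀ N j, 0 ≤ a N j) (hG : ∀ N i j, ‖G N i j‖ ≤ a N j) (S : ℝ)
    (hS : ∀ N, ∑ j, a N j ≤ S)
    (hlim : ∀ k, Tendsto (fun N => (G N ^ (k + 1)).trace) atTop (𝓝 (opTrace (K ^ (k + 1))))) :
    Tendsto (fun N => (1 + G N).det) atTop (𝓝 (fredholmDet K)) := by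
  rw [fredholmDet_eq]
  have h : ∀ N, (1 + G N).det = ∑' m, newtonE (fun k => (G N ^ k).trace) m := by
    intro N
    rw [← hasSum_coeff]
    exact tsum_congr fun m => (newtonE_matrix _ m).symm
  simp only [h]
  refine tendsto_tsum_of_dominated_convergence (summable_detBd S)
    (fun m => newtonE_tendsto (fun N k => (G N ^ k).trace) _ hlim m)
    (Eventually.of_forall fun N m => ?_)
  rw [newtonE_matrix]
  exact coeff_bound _ (a N) (ha N) (hG N) S (hS N) m

/-- Finite rank operator attached to a finite family. -/
noncomputable def finOp {κ : Type*} [Fintype κ] (u v : κ → H) : H →L[ℂ] H :=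
  ∑ i, rankOne ℂ (u i) (v i)

noncomputable def gramM {κ κ' : Type*} (v : κ → H) (u : κ' → H) : Matrix κ κ' ℂ :=
  Matrix.of fun i j => ⟪v i, u j⟫_ℂ

lemma finOp_apply {κ : Type*} [Fintype κ] (u v : κ → H) (g : H) :
    finOp u v g = ∑ i, ⟪v i, g⟫_ℂ • u i := by
  simp [finOp, ContinuousLinearMap.sum_apply]

lemma gramM_pow {κ : Type*} [Fintype κ] [DecidableEq κ] (u v : κ → H) (k : ℕ) (i j : κ) :
    ((gramM v u) ^ (k + 1)) i j = ⟪v i, (finOp u v ^ k) (u j)⟫_ℂ := by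
  induction k generalizing j with
  | zero => simp [gramM]
  | succ k ih =>
    rw [pow_succ, Matrix.mul_apply, pow_succ (finOp u v), ContinuousLinearMap.mul_apply, finOp_apply,
      map_sum, inner_sum]
    refine Finset.sum_congr rfl fun l _ => ?_
    rw [ih, map_smul, inner_smul_right, mul_comm]
    rfl

lemma gramM_pow_trace {κ : Type*} [Fintype κ] [DecidableEq κ] (u v : κ → H) (k : ℕ) :
    ((gramM v u) ^ (k + 1)).trace = ∑ i, ⟪v i, (finOp u v ^ k) (u i)⟫_ℂ := by
  simp only [Matrix.trace, Matrix.diag, gramM_pow]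

lemma finOp_tendsto {K : H →L[ℂ] H} {u v : ℕ → H} (h : TraceDecomp K u v) :
    Tendsto (fun N => finOp (fun i : Fin N => u i) (fun i : Fin N => v i)) atTop (𝓝 K) := by
  have hs : Summable (fun n => rankOne ℂ (u n) (v n)) := by
    refine Summable.of_norm ?_
    simpa using h.2
  have h1 : ∑' n, rankOne ℂ (u n) (v n) = K := by
    ext g
    have h2 := hs.hasSum.mapL (ContinuousLinearMap.apply ℂ H g)
    have h3 := h.1 g
    exact h2.unique h3
  have h4 := hs.hasSum.tendsto_sum_nat
  rw [h1] at h4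
  refine h4.congr fun N => ?_
  rw [Finset.sum_range]
  rfl

lemma trace_tendsto {u v : ℕ → H} (hv : ∀ n, ‖v n‖ ≤ 1) (hu : Summable (fun n => ‖u n‖))
    (X : ℕ → H →L[ℂ] H) (Y : H →L[ℂ] H) (hX : Tendsto X atTop (𝓝 Y)) :
    Tendsto (fun N => ∑ i : Fin N, ⟪v i, X N (u i)⟫_ℂ) atTop (𝓝 (∑' n, ⟪v n, Y (u n)⟫_ℂ)) := by
  have h1 : ∀ N, ∑ i : Fin N, ⟪v i, X N (u i)⟫_ℂ =
      ∑' n, if n < N then ⟪v n, X N (u n)⟫_ℂ else 0 := by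
    intro N
    rw [tsum_eq_sum (s := Finset.range N), ← Finset.sum_range (fun n => ⟪v n, X N (u n)⟫_ℂ)]
    · refine Finset.sum_congr rfl fun n hn => ?_
      rw [if_pos (Finset.mem_range.1 hn)]
    · intro n hn
      rw [if_neg (by simpa using hn)]
  simp only [h1]
  refine tendsto_tsum_of_dominated_convergence (hu.mul_left (‖Y‖ + 1)) (fun n => ?_) ?_
  · have h2 : Tendsto (fun N => ⟪v n, X N (u n)⟫_ℂ) atTop (𝓝 ⟪v n, Y (u n)⟫_ℂ) := by
      have h3 : Tendsto (fun N => X N (u n)) atTop (𝓝 (Y (u n))) :=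
        ((ContinuousLinearMap.apply ℂ H (u n)).continuous.tendsto Y).comp hX
      exact tendsto_const_nhds.inner h3
    refine h2.congr' ?_
    filter_upwards [eventually_gt_atTop n] with N hN
    rw [if_pos hN]
  · filter_upwards [hX.norm.eventually (gt_mem_nhds (lt_add_one ‖Y‖))] with N hN n
    have h0 : 0 ≤ (‖Y‖ + 1) * ‖u n‖ := by positivity
    split_ifs
    · calc _ ≤ ‖v n‖ * ‖X N (u n)‖ := norm_inner_le_norm _ _
        _ ≤ 1 * (‖X N‖ * ‖u n‖) := by
          gcongr
          · exact hv n
          · exact (X N).le_opNorm _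
        _ ≤ _ := by rw [one_mul]; gcongr
    · simpa using h0

lemma sum_fin_le {u : ℕ → H} (hu : Summable (fun n => ‖u n‖)) (N : ℕ) :
    ∑ i : Fin N, ‖u i‖ ≤ ∑' n, ‖u n‖ := by
  rw [← Finset.sum_range (fun n => ‖u n‖)]
  exact hu.sum_le_tsum _ fun _ _ => norm_nonneg _

lemma gramM_bound {κ : Type*} {u v : κ → H} (hv : ∀ n, ‖v n‖ ≤ 1) (i j : κ) :
    ‖gramM v u i j‖ ≤ ‖u j‖ :=
  (norm_inner_le_norm _ _).trans (mul_le_of_le_one_left (norm_nonneg _) (hv i))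

lemma fredholmDet_tendsto {K : H →L[ℂ] H} {u v : ℕ → H} (h : TraceDecomp K u v)
    (hv : ∀ n, ‖v n‖ ≤ 1) (hu : Summable (fun n => ‖u n‖)) :
    Tendsto (fun N => (1 + gramM (fun i : Fin N => v i) (fun i : Fin N => u i)).det) atTop
      (𝓝 (fredholmDet K)) := by
  refine fredholmDet_limit K (fun N => Fin N) _ (fun N j => ‖u j‖) (fun _ _ => norm_nonneg _)
    (fun N i j => gramM_bound (fun n : Fin N => hv n) i j) (∑' n, ‖u n‖) (sum_fin_le hu) fun k => ?_
  simp only [gramM_pow_trace]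
  rw [pow_succ, (h.mul_left (K ^ k)).opTrace_eq]
  exact trace_tendsto hv hu _ _ ((finOp_tendsto h).pow k)

theorem fredholmDet_mul {A B : H →L[ℂ] H} (hA : IsTraceClass A) (hB : IsTraceClass B) :
    fredholmDet (A + (1 + A) * B) = fredholmDet A * fredholmDet B := by
  obtain ⟨u, v, h, hv, hu⟩ := hA.normalized
  obtain ⟨u', v', h', hv', hu'⟩ := hB.normalized
  let AN : ℕ → H →L[ℂ] H := fun N => finOp (fun i : Fin N => u i) (fun i : Fin N => v i)
  let BN : ℕ → H →L[ℂ] H := fun N => finOp (fun i : Fin N => u' i) (fun i : Fin N => v' i)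
  have hAN : Tendsto AN atTop (𝓝 A) := finOp_tendsto h
  have hBN : Tendsto BN atTop (𝓝 B) := finOp_tendsto h'
  have hANb : ∀ N, ‖AN N‖ ≤ ∑' n, ‖u n‖ := by
    intro N
    refine (norm_sum_le _ _).trans ((Finset.sum_le_sum fun i _ => ?_).trans (sum_fin_le hu N))
    rw [norm_rankOne]
    exact mul_le_of_le_one_right (norm_nonneg _) (hv i)
  let U : ∀ N, Fin N ⊕ Fin N → H := fun N =>
    Sum.elim (fun i => u i) (fun i => (1 + AN N) (u' i))
  let V : ∀ N, Fin N ⊕ Fin N → H := fun N => Sum.elim (fun i => v i) (fun i => v' i)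
  have hV : ∀ N i, ‖V N i‖ ≤ 1 := by
    rintro N (i | i)
    · exact hv i
    · exact hv' i
  have hOp : ∀ N, finOp (U N) (V N) = AN N + (1 + AN N) * BN N := by
    intro N
    ext g
    simp only [finOp_apply, Fintype.sum_sum_type, ContinuousLinearMap.add_apply,
      ContinuousLinearMap.mul_apply, U, V, Sum.elim_inl, Sum.elim_inr]
    congr 1
    · exact (finOp_apply _ _ _).symm
    · simp only [BN, finOp_apply]
      rw [map_sum, map_sum, ← Finset.sum_add_distrib]
      refine Finset.sum_congr rfl fun i _ => ?_
      rw [map_smul, map_smul, smul_add]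
  have hblock : ∀ N, (1 + gramM (V N) (U N)).det =
      (1 + gramM (fun i : Fin N => v i) (fun i : Fin N => u i)).det *
      (1 + gramM (fun i : Fin N => v' i) (fun i : Fin N => u' i)).det := by
    intro N
    rw [← block_det _ (gramM (fun i : Fin N => v i) (fun i : Fin N => u' i))
      (gramM (fun i : Fin N => v' i) (fun i : Fin N => u i))]
    congr 2
    ext (i | i) (j | j)
    · rfl
    · simp [gramM, U, V, AN, finOp_apply, Matrix.mul_apply, inner_add_right, inner_sum,
        inner_smul_right, mul_comm]
    · rfl
    · simp [gramM, U, V, AN, finOp_apply, Matrix.mul_apply, inner_add_right, inner_sum,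
        inner_smul_right, mul_comm]
  have hlim : Tendsto (fun N => (1 + gramM (V N) (U N)).det) atTop
      (𝓝 (fredholmDet (A + (1 + A) * B))) := by
    refine fredholmDet_limit _ (fun N => Fin N ⊕ Fin N) _ (fun N j => ‖U N j‖)
      (fun _ _ => norm_nonneg _) (fun N i j => gramM_bound (hV N) i j)
      (∑' n, ‖u n‖ + (1 + ∑' n, ‖u n‖) * ∑' n, ‖u' n‖) (fun N => ?_) fun k => ?_
    · rw [Fintype.sum_sum_type]
      refine add_le_add (sum_fin_le hu N) ?_
      calc _ ≤ ∑ i : Fin N, (1 + ∑' n, ‖u n‖) * ‖u' i‖ := by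
            refine Finset.sum_le_sum fun i _ => ?_
            change ‖u' i + AN N (u' i)‖ ≤ _
            refine (norm_add_le _ _).trans ?_
            rw [add_mul, one_mul]
            gcongr
            exact ((AN N).le_opNorm _).trans (by gcongr; exact hANb N)
        _ ≤ _ := by
            rw [← Finset.mul_sum]
            have : 0 ≤ ∑' n, ‖u n‖ := tsum_nonneg fun _ => norm_nonneg _
            gcongr
            exact sum_fin_le hu' N
    · simp only [gramM_pow_trace, Fintype.sum_sum_type, hOp]
      set C := A + (1 + A) * B with hC
      have hCN : Tendsto (fun N => AN N + (1 + AN N) * BN N) atTop (𝓝 C) :=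
        hAN.add ((tendsto_const_nhds.add hAN).mul hBN)
      have e1 : C ^ (k + 1) = C ^ k * A + (C ^ k * (1 + A)) * B := by
        rw [pow_succ]
        conv_lhs => rw [hC]
        rw [← hC, mul_add, mul_assoc]
      rw [e1, opTrace_add (hA.mul_left _) (hB.mul_left _), (h.mul_left _).opTrace_eq,
        (h'.mul_left _).opTrace_eq]
      refine Tendsto.add ?_ ?_
      · exact trace_tendsto hv hu _ _ (hCN.pow k)
      · exact trace_tendsto hv' hu' (fun N => (AN N + (1 + AN N) * BN N) ^ k * (1 + AN N)) _
          ((hCN.pow k).mul (tendsto_const_nhds.add hAN))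
  simp only [hblock] at hlim
  exact tendsto_nhds_unique hlim ((fredholmDet_tendsto h hv hu).mul (fredholmDet_tendsto h' hv' hu'))

lemma fredholmDet_compress {K P : H →L[ℂ] H} (hK : IsTraceClass K) (hP : P * P = P) :
    fredholmDet (P * K * P) = fredholmDet (K * P) := by
  rw [fredholmDet_eq, fredholmDet_eq]
  refine tsum_congr fun m => newtonE_congr _ _ (fun k => ?_) m
  have h1 : ∀ k, (P * K * P) ^ (k + 1) = P * (K * P) ^ (k + 1) := by
    intro k
    induction k with
    | zero => simp [mul_assoc]
    | succ k ih =>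
      rw [pow_succ, ih, pow_succ (K * P) (k + 1), pow_succ (K * P) k]
      simp only [mul_assoc]
      rw [← mul_assoc P P, hP]
  have h2 : (K * P) ^ (k + 1) * P = (K * P) ^ (k + 1) := by
    rw [pow_succ, mul_assoc, mul_assoc, hP]
  rw [h1, opTrace_mul_comm _ P, h2]
  rw [pow_succ]
  exact (hK.mul_right P).mul_left _

/-- Jacobi–Dodgson identity: for trace class `K` with `I + K` invertible and
an orthogonal projection `P` with complement `Q = I - P`,
`det(P(I+K)P) = det(I+K) · det(Q(I+K)⁻¹Q)`, where the determinant of `P(I+K)P` on the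
range of `P` equals `det(I + PKP)`, and that of `Q(I+K)⁻¹Q` on the range of `Q` equals
`det(I + Q((I+K)⁻¹ - I)Q)`. -/
theorem jacobi_dodgson (K P : H →L[ℂ] H)
    (hK : IsTraceClass K) (hinv : IsUnit (1 + K))
    (hPsa : IsSelfAdjoint P) (hPidem : P * P = P) :
    fredholmDet (P * K * P) =
      fredholmDet K *
        fredholmDet ((1 - P) * (Ring.inverse (1 + K) - 1) * (1 - P)) := by
  have hQ : (1 - P) * (1 - P) = 1 - P := by
    rw [mul_sub, sub_mul, sub_mul, hPidem]; simp
  have hR : Ring.inverse (1 + K) - 1 = -Ring.inverse (1 + K) * K := by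
    have h1 := Ring.inverse_mul_cancel _ hinv
    rw [mul_add, mul_one] at h1
    rw [neg_mul, eq_neg_iff_add_eq_zero, sub_add_eq_add_sub, h1, sub_self]
  have hR' : IsTraceClass (Ring.inverse (1 + K) - 1) := by
    rw [hR]; exact hK.mul_left _
  rw [fredholmDet_compress hK hPidem, fredholmDet_compress hR' hQ,
    ← fredholmDet_mul hK (hR'.mul_right _)]
  congr 1
  have h3 : (1 + K) * (Ring.inverse (1 + K) - 1) = -K := by
    rw [mul_sub (1 + K), Ring.mul_inverse_cancel _ hinv, mul_one]; abel
  rw [← mul_assoc, h3]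
  simp [mul_sub]
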